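/- Let n_1, n_2 >= 1 and n >= max(n_1, n_2) be integers. Assume mu_1 and mu'_2 are unramified and mu_2 is trivial on 1 + p^n Z_p, and set alpha_1 = mu_1(p)^{-1} * sqrt(p). Let v_1 : G -> C satisfy: v_1(b*g) = mu_1(a) * mu'_1(d) * |a/d|^{1/2} * v_1(g) for every b = [[a,b0],[0,d]] in B and g in G; v_1(g*k) = mu_1(d) * mu'_1(d) * v_1(g) for every g in G and every k in I_{n_1} with (2,2) entry d; v_1(k) = 0 for every k in K \ I_{n_1}; and v_1(1) = 1. Let v_2 : G -> C satisfy: v_2(b*g) = mu_2(a) * mu'_2(d) * |a/d|^{1/2} * v_2(g) for every b = [[a,b0],[0,d]] in B and g in G; v_2(g*k) = mu_2(d) * mu'_2(d) * v_2(g) for every g in G and every k in I_{n_2} with (2,2) entry d; v_2(k) = 0 for every k in I; and v_2([[1,0],[1,1]]) = 1. Let h : G -> C satisfy h(t*g) = chi_1(t) * chi'_2(t) * h(g) for all t in T and g in G, h(j) = 1 for all j in J_n, and h(g) = 0 whenever g is not of the form t*j with t in T and j in J_n; and let H : G × G -> C satisfy H(b_1*g_1, b_2*g_2) = chi_1(b_1)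 * chi_2(b_2) * delta(b_1*b_2)^{1/2} * H(g_1,g_2) for all b_1, b_2 in B and g_1, g_2 in G, H(g,g) = 0 and H(g, w*g) = h(g) for all g in G. Then for all (g_1,g_2) in G × G: H(g_1,g_2) = mu_2(-1) * alpha_1^{n_1 - n} * v_1(g_1 * gamma^{n - n_1}) * v_2(g_2). -/

import Mathlib

open Matrix

noncomputable section

variable (p : ℕ) [Fact p.Prime]

/-- The underlying matrix of an element of `GL₂(ℚ_p)`. -/
def mat (g : GL (Fin 2) ℚ_[p]) : Matrix (Fin 2) (Fin 2) ℚ_[p] := g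

/-- Membership in `K = GL₂(ℤ_p)`: all entries are `p`-adic integers and the
determinant is a unit of `ℤ_p`. -/
def inK (g : GL (Fin 2) ℚ_[p]) : Prop :=
  (∀ i j, ‖mat p g i j‖ ≤ 1) ∧ ‖(mat p g).det‖ = 1

/-- Membership in the Iwahori subgroup `I_n` of `K`: for `n = 0`, `I_0 = K`;
for `n ≥ 1`, the diagonal entries are units of `ℤ_p` and the lower left entry
lies in `p^n ℤ_p`. -/
def inI (n : ℕ) (g : GL (Fin 2) ℚ_[p]) : Prop :=
  inK p g ∧ (n = 0 ∨
    (‖mat p g 0 0‖ = 1 ∧ ‖mat p g 1 1‖ = 1 ∧ ‖mat p g 1 0‖ ≤ (p : ℝ) ^ (-(n : ℤ))))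

/-- `p` as a unit of `ℚ_p`. -/
def pu : ℚ_[p]ˣ :=
  Units.mk0 (p : ℚ_[p]) (by exact_mod_cast (Fact.out : p.Prime).ne_zero)

/-- The element `γ = diag(p⁻¹, 1)` of `GL₂(ℚ_p)`. -/
def gamma : GL (Fin 2) ℚ_[p] :=
  Matrix.GeneralLinearGroup.mkOfDetNeZero !![(p : ℚ_[p])⁻¹, 0; 0, 1] (by
    have hp : (p : ℚ_[p]) ≠ 0 := by exact_mod_cast (Fact.out : p.Prime).ne_zero
    simp [Matrix.det_fin_two_of, hp])

/-- A character of `ℚ_p^×` is unramified if it is trivial on `ℤ_p^×`. -/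
def Unramified (μ : ℚ_[p]ˣ →* ℂˣ) : Prop :=
  ∀ u : ℚ_[p]ˣ, ‖(u : ℚ_[p])‖ = 1 → μ u = 1

/-- A character of `ℚ_p^×` is trivial on `1 + p^j ℤ_p`. -/
def TrivialOnOnePlusP (j : ℕ) (μ : ℚ_[p]ˣ →* ℂˣ) : Prop :=
  ∀ u : ℚ_[p]ˣ, ‖(u : ℚ_[p]) - 1‖ ≤ (p : ℝ) ^ (-(j : ℤ)) → μ u = 1

/-- The Weyl element `w = [[0,1],[1,0]]` of `GL₂(ℚ_p)`. -/
def wEl : GL (Fin 2) ℚ_[p] :=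
  Matrix.GeneralLinearGroup.mkOfDetNeZero !![(0 : ℚ_[p]), 1; 1, 0] (by
    simp [Matrix.det_fin_two_of])

/-- Membership in the diagonal torus `T` of `GL₂(ℚ_p)`. -/
def inT (g : GL (Fin 2) ℚ_[p]) : Prop := mat p g 1 0 = 0 ∧ mat p g 0 1 = 0

/-- Membership in `J_n = [[1, ℤ_p], [p^n ℤ_p, 1]]`. -/
def inJ (n : ℕ) (g : GL (Fin 2) ℚ_[p]) : Prop :=
  mat p g 0 0 = 1 ∧ mat p g 1 1 = 1 ∧ ‖mat p g 0 1‖ ≤ 1 ∧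
    ‖mat p g 1 0‖ ≤ (p : ℝ) ^ (-(n : ℤ))

/-- The element `[[1,0],[1,1]]` of `GL₂(ℚ_p)`. -/
def lowerOne : GL (Fin 2) ℚ_[p] :=
  Matrix.GeneralLinearGroup.mkOfDetNeZero !![(1 : ℚ_[p]), 0; 1, 1] (by
    simp [Matrix.det_fin_two_of])

/-!
Both sides transform under `B × B` on the left by the same character, and `G` is the disjoint union
of `B I` and `B w I`, so it suffices to compare them on the representatives `[[1, 0], [x, 1]]` with
`‖x‖ < 1` and `w [[1, y], [0, 1]]` with `‖y‖ ≤ 1` of `B \ G`. Off the diagonal of `B \ G × B \ G`,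
every pair `(g₁, g₂)` is in the `B × B`-orbit of some `(g, w g)`, where the rows of `g` are the
bottom rows of `g₂` and `g₁`; hence `H` is supported on the pairs with `[[1, y], [x, 1]] ∈ J_n`,
that is, on `x ∈ p ^ n ℤ_p` and `y ∈ ℤ_p`. There the determinant `1 - y x` of this matrix lies in
`1 + p ^ n ℤ_p`, so `H` is constant. The translate of `v₁` by `γ ^ (n - n₁)` is supported on exactly
the same `x`, because `[[1, 0], [x, 1]] γ ^ m = γ ^ m [[1, 0], [x p ^ (-m), 1]]`, and `v₂` on
exactly the same `y`; the values `α₁ ^ (n - n₁)` and `μ₂ (-1)` which they take there account for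
the constant.
-/

section

variable {p : ℕ} [Fact p.Prime]

section Matrices

@[simp]
theorem mat_mul (g k : GL (Fin 2) ℚ_[p]) : mat p (g * k) = mat p g * mat p k := rfl

@[simp]
theorem mat_one : mat p 1 = 1 := rfl

theorem mat_injective : Function.Injective (mat p) := Units.val_injective

theorem det_mat_ne_zero (g : GL (Fin 2) ℚ_[p]) : (mat p g).det ≠ 0 := g.det_ne_zero

theorem mat_inv (g : GL (Fin 2) ℚ_[p]) :
    mat p g⁻¹ =
      (mat p g).det⁻¹ • !![mat p g 1 1, -mat p g 0 1; -mat p g 1 0, mat p g 0 0] := by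
  simp [mat, Matrix.inv_def, Matrix.adjugate_fin_two]

/-- The element `[[a, b], [c, d]]` of `GL₂(ℚ_p)`. -/
def ofEntries (a b c d : ℚ_[p]) (h : a * d - b * c ≠ 0) : GL (Fin 2) ℚ_[p] :=
  Matrix.GeneralLinearGroup.mkOfDetNeZero !![a, b; c, d] (by rwa [Matrix.det_fin_two_of])

@[simp]
theorem mat_ofEntries (a b c d : ℚ_[p]) (h : a * d - b * c ≠ 0) :
    mat p (ofEntries a b c d h) = !![a, b; c, d] := rfl

/-- The lower unipotent element `[[1, 0], [x, 1]]`; for `‖x‖ < 1` these represent the cosets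
in `B \ B I`, where `G` is the disjoint union of `B I` and `B w I`. -/
def lowerUnipotent (x : ℚ_[p]) : GL (Fin 2) ℚ_[p] := ofEntries 1 0 x 1 (by simp)

/-- The upper unipotent element `[[1, y], [0, 1]]`; for `‖y‖ ≤ 1` its translates by `w` represent
the cosets in `B \ B w I`. -/
def upperUnipotent (y : ℚ_[p]) : GL (Fin 2) ℚ_[p] := ofEntries 1 y 0 1 (by simp)

@[simp]
theorem mat_lowerUnipotent (x : ℚ_[p]) : mat p (lowerUnipotent x) = !![1, 0; x, 1] := rfl

@[simp]
theorem mat_upperUnipotent (y : ℚ_[p]) : mat p (upperUnipotent y) = !![1, y; 0, 1] := rfl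

@[simp]
theorem mat_wEl : mat p (wEl p) = !![0, 1; 1, 0] := rfl

@[simp]
theorem mat_lowerOne : mat p (lowerOne p) = !![1, 0; 1, 1] := rfl

@[simp]
theorem mat_gamma : mat p (gamma p) = !![(p : ℚ_[p])⁻¹, 0; 0, 1] := rfl

@[simp]
theorem mat_gamma_pow (m : ℕ) :
    mat p (gamma p ^ m) = !![((p : ℚ_[p]) ^ m)⁻¹, 0; 0, 1] := by
  induction m with
  | zero => simp [Matrix.one_fin_two]
  | succ m ih => simp [pow_succ, ih, mul_comm]

theorem lowerUnipotent_mul_gamma_pow (x : ℚ_[p]) (m : ℕ) :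
    lowerUnipotent x * gamma p ^ m = gamma p ^ m * lowerUnipotent (x * ((p : ℚ_[p]) ^ m)⁻¹) :=
  mat_injective (by simp)

end Matrices

section Norms

theorem zpow_neg_natCast_le_one (n : ℕ) : (p : ℝ) ^ (-(n : ℤ)) ≤ 1 :=
  zpow_le_one_of_nonpos₀ (mod_cast (Fact.out : p.Prime).one_le) (by simp)

theorem zpow_neg_natCast_lt_one {n : ℕ} (hn : 1 ≤ n) : (p : ℝ) ^ (-(n : ℤ)) < 1 :=
  zpow_lt_one_of_neg₀ (mod_cast (Fact.out : p.Prime).one_lt) (by omega)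

theorem norm_eq_one_of_norm_sub_one_lt {u : ℚ_[p]} (hu : ‖u - 1‖ < 1) : ‖u‖ = 1 := by
  simpa using Padic.norm_eq_of_norm_sub_lt_right (z2 := (1 : ℚ_[p])) (by simpa using hu)

theorem norm_mul_inv_pow_le_iff (x : ℚ_[p]) (n m : ℕ) :
    ‖x * ((p : ℚ_[p]) ^ m)⁻¹‖ ≤ (p : ℝ) ^ (-(n : ℤ)) ↔
      ‖x‖ ≤ (p : ℝ) ^ (-((n + m : ℕ) : ℤ)) := by
  have hp : (0 : ℝ) < p := mod_cast (Fact.out : p.Prime).pos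
  rw [norm_mul, norm_inv, norm_pow, Padic.norm_p, inv_pow, inv_inv,
    ← le_div_iff₀ (pow_pos hp m), ← zpow_natCast, ← zpow_sub₀ hp.ne']
  push_cast
  rw [neg_add']

end Norms

section Characters

theorem Unramified.trivialOnOnePlusP {μ : ℚ_[p]ˣ →* ℂˣ} (hμ : Unramified p μ) {n : ℕ}
    (hn : 1 ≤ n) : TrivialOnOnePlusP p n μ := fun u hu ↦
  hμ u (norm_eq_one_of_norm_sub_one_lt (hu.trans_lt (zpow_neg_natCast_lt_one hn)))

theorem TrivialOnOnePlusP.mul {μ ν : ℚ_[p]ˣ →* ℂˣ} {n : ℕ} (hμ : TrivialOnOnePlusP p n μ)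
    (hν : TrivialOnOnePlusP p n ν) : TrivialOnOnePlusP p n (μ * ν) := fun u hu ↦ by
  rw [MonoidHom.mul_apply, hμ u hu, hν u hu, mul_one]

end Characters

section CompactSubgroups

theorem inK_lowerUnipotent {x : ℚ_[p]} (hx : ‖x‖ ≤ 1) : inK p (lowerUnipotent x) := by
  simp [inK, Fin.forall_fin_two, hx]

theorem inK_upperUnipotent {y : ℚ_[p]} (hy : ‖y‖ ≤ 1) : inK p (upperUnipotent y) := by
  simp [inK, Fin.forall_fin_two, hy]

theorem inK_wEl_mul_upperUnipotent {y : ℚ_[p]} (hy : ‖y‖ ≤ 1) :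
    inK p (wEl p * upperUnipotent y) := by
  simp [inK, Fin.forall_fin_two, hy]

theorem inI_lowerUnipotent {n : ℕ} {x : ℚ_[p]} (hx : ‖x‖ ≤ (p : ℝ) ^ (-(n : ℤ))) :
    inI p n (lowerUnipotent x) :=
  ⟨inK_lowerUnipotent (hx.trans (zpow_neg_natCast_le_one n)), Or.inr (by simpa using hx)⟩

theorem inI_upperUnipotent (n : ℕ) {y : ℚ_[p]} (hy : ‖y‖ ≤ 1) : inI p n (upperUnipotent y) :=
  ⟨inK_upperUnipotent hy, Or.inr (by simp)⟩

theorem not_inI_lowerUnipotent {n : ℕ} (hn : 1 ≤ n) {x : ℚ_[p]}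
    (hx : (p : ℝ) ^ (-(n : ℤ)) < ‖x‖) : ¬ inI p n (lowerUnipotent x) := by
  simpa [inI, Nat.one_le_iff_ne_zero.mp hn] using fun _ ↦ hx

theorem not_inI_wEl_mul_upperUnipotent {n : ℕ} (hn : 1 ≤ n) (y : ℚ_[p]) :
    ¬ inI p n (wEl p * upperUnipotent y) := by
  simp [inI, Nat.one_le_iff_ne_zero.mp hn]

theorem norm_entries_le_of_eq_torus_mul {n : ℕ} {g : GL (Fin 2) ℚ_[p]}
    (hg : ∃ t j : GL (Fin 2) ℚ_[p], inT p t ∧ inJ p n j ∧ g = t * j) :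
    ‖mat p g 0 1‖ ≤ ‖mat p g 0 0‖ ∧
      ‖mat p g 1 0‖ ≤ (p : ℝ) ^ (-(n : ℤ)) * ‖mat p g 1 1‖ := by
  obtain ⟨t, j, ⟨t10, t01⟩, ⟨j00, j11, j01, j10⟩, rfl⟩ := hg
  simp only [mat_mul, Matrix.mul_apply, Fin.sum_univ_two, t10, t01, j00, j11, zero_mul, mul_one,
    add_zero, zero_add, norm_mul]
  exact ⟨mul_le_of_le_one_right (norm_nonneg _) j01,
    (mul_comm _ _).trans_le (mul_le_mul_of_nonneg_right j10 (norm_nonneg _))⟩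

theorem apply_mul_of_inI {n : ℕ} {μ μ' : ℚ_[p]ˣ →* ℂˣ} {v : GL (Fin 2) ℚ_[p] → ℂ}
    (hI : ∀ (g k : GL (Fin 2) ℚ_[p]) (d : ℚ_[p]ˣ),
      inI p n k → mat p k 1 1 = d → v (g * k) = (μ d : ℂ) * (μ' d : ℂ) * v g)
    (g : GL (Fin 2) ℚ_[p]) {k : GL (Fin 2) ℚ_[p]} (hk : inI p n k) (hk11 : mat p k 1 1 = 1) :
    v (g * k) = v g := by
  simpa using hI g k 1 hk (by simpa using hk11)

end CompactSubgroups

section BorelCosets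

/-- `g` and `g'` have the same image in `B \ G`, that is, proportional bottom rows. -/
def SameBorelCoset (g g' : GL (Fin 2) ℚ_[p]) : Prop :=
  mat p g 1 0 * mat p g' 1 1 = mat p g 1 1 * mat p g' 1 0

theorem SameBorelCoset.exists_mul_eq {g g' : GL (Fin 2) ℚ_[p]} (h : SameBorelCoset g g') :
    ∃ (b : GL (Fin 2) ℚ_[p]) (a d : ℚ_[p]ˣ),
      mat p b 1 0 = 0 ∧ mat p b 0 0 = a ∧ mat p b 1 1 = d ∧ b * g' = g := by
  have h10 : mat p (g * g'⁻¹) 1 0 = 0 := by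
    simp only [mat_mul, mat_inv, Matrix.mul_apply, Fin.sum_univ_two, Matrix.smul_apply,
      Matrix.of_apply, Matrix.cons_val', Matrix.cons_val_zero, Matrix.cons_val_one,
      Matrix.cons_val_fin_one, smul_eq_mul]
    rw [SameBorelCoset] at h
    linear_combination (mat p g').det⁻¹ * h
  have hdet := det_mat_ne_zero (g * g'⁻¹)
  rw [Matrix.det_fin_two, h10, mul_zero, sub_zero] at hdet
  exact ⟨g * g'⁻¹, .mk0 _ (left_ne_zero_of_mul hdet), .mk0 _ (right_ne_zero_of_mul hdet),
    h10, rfl, rfl, inv_mul_cancel_right g g'⟩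

theorem exists_upper_mul_eq_of_row_eq {g g' : GL (Fin 2) ℚ_[p]} (a : ℚ_[p])
    (h : mat p g 1 = mat p g' 1) (ha : (mat p g).det = a * (mat p g').det) :
    ∃ b : GL (Fin 2) ℚ_[p],
      mat p b 1 0 = 0 ∧ mat p b 0 0 = a ∧ mat p b 1 1 = 1 ∧ b * g' = g := by
  have hdet := det_mat_ne_zero g'
  have hrow : mat p (g * g'⁻¹) 1 = mat p (g' * g'⁻¹) 1 := by
    rw [mat_mul, mat_mul, Matrix.mul_apply_eq_vecMul, Matrix.mul_apply_eq_vecMul, h]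
  have h10 : mat p (g * g'⁻¹) 1 0 = 0 := by simp [hrow]
  have h11 : mat p (g * g'⁻¹) 1 1 = 1 := by simp [hrow]
  refine ⟨g * g'⁻¹, h10, ?_, h11, inv_mul_cancel_right g g'⟩
  have hmul : (mat p (g * g'⁻¹)).det * (mat p g').det = (mat p g).det := by
    rw [← Matrix.det_mul, ← mat_mul, inv_mul_cancel_right]
  rw [Matrix.det_fin_two, h10, h11, mul_one, mul_zero, sub_zero, ha] at hmul
  exact mul_right_cancel₀ hdet hmul

theorem exists_sameBorelCoset (g : GL (Fin 2) ℚ_[p]) :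
    (∃ x : ℚ_[p], ‖x‖ < 1 ∧ SameBorelCoset g (lowerUnipotent x)) ∨
      ∃ y : ℚ_[p], ‖y‖ ≤ 1 ∧ SameBorelCoset g (wEl p * upperUnipotent y) := by
  rcases lt_or_ge ‖mat p g 1 0‖ ‖mat p g 1 1‖ with hlt | hle
  · have hd : mat p g 1 1 ≠ 0 := norm_pos_iff.mp ((norm_nonneg _).trans_lt hlt)
    refine .inl ⟨mat p g 1 0 / mat p g 1 1, ?_, ?_⟩
    · rwa [norm_div, div_lt_one (norm_pos_iff.mpr hd)]
    · simp [SameBorelCoset, mul_div_cancel₀, hd]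
  · have hc : mat p g 1 0 ≠ 0 := fun hc ↦ by
      have hd : mat p g 1 1 = 0 := by simpa [hc] using hle
      exact det_mat_ne_zero g (by simp [Matrix.det_fin_two, hc, hd])
    refine .inr ⟨mat p g 1 1 / mat p g 1 0, ?_, ?_⟩
    · rw [norm_div]
      exact div_le_one_of_le₀ hle (norm_nonneg _)
    · simp [SameBorelCoset, mul_div_cancel₀, hc]

theorem sameBorelCoset_lowerUnipotent {z : ℚ_[p]} (hz : z ≠ 0) :
    SameBorelCoset (lowerUnipotent z) (wEl p * upperUnipotent z⁻¹) := by
  simp [SameBorelCoset, hz]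

theorem sameBorelCoset_wEl_mul_upperUnipotent_mul_gamma_pow (y : ℚ_[p]) (m : ℕ) :
    SameBorelCoset (wEl p * upperUnipotent y * gamma p ^ m)
      (wEl p * upperUnipotent (y * (p : ℚ_[p]) ^ m)) := by
  have hp : (p : ℚ_[p]) ≠ 0 := mod_cast (Fact.out : p.Prime).ne_zero
  have hcancel : ((p : ℚ_[p]) ^ m)⁻¹ * (y * (p : ℚ_[p]) ^ m) = y := by field_simp
  simpa [SameBorelCoset] using hcancel

end BorelCosets

section InducedFunctions

/-- `v` transforms on the left under `B` as the elements of the normalized induction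
`Ind_B^G (μ ⊗ μ')` do. -/
def IsInduced (μ μ' : ℚ_[p]ˣ →* ℂˣ) (v : GL (Fin 2) ℚ_[p] → ℂ) : Prop :=
  ∀ (b g : GL (Fin 2) ℚ_[p]) (a d : ℚ_[p]ˣ),
    mat p b 1 0 = 0 → mat p b 0 0 = a → mat p b 1 1 = d →
    v (b * g) = (μ a : ℂ) * (μ' d : ℂ) * (Real.sqrt ‖(a : ℚ_[p]) / (d : ℚ_[p])‖ : ℂ) * v g

namespace IsInduced

variable {μ μ' : ℚ_[p]ˣ →* ℂˣ} {v v' : GL (Fin 2) ℚ_[p] → ℂ}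

theorem zero (μ μ' : ℚ_[p]ˣ →* ℂˣ) : IsInduced μ μ' fun _ ↦ 0 := by
  intro b g a d _ _ _
  rw [mul_zero]

theorem mul_const (hv : IsInduced μ μ' v) (c : ℂ) : IsInduced μ μ' fun g ↦ v g * c := by
  intro b g a d h10 h00 h11
  simp only [hv b g a d h10 h00 h11, mul_assoc]

theorem const_mul (hv : IsInduced μ μ' v) (c : ℂ) : IsInduced μ μ' fun g ↦ c * v g := by
  simpa only [mul_comm c] using hv.mul_const c

theorem comp_mul_right (hv : IsInduced μ μ' v) (k : GL (Fin 2) ℚ_[p]) :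
    IsInduced μ μ' fun g ↦ v (g * k) := by
  intro b g a d h10 h00 h11
  simp only [mul_assoc b, hv b (g * k) a d h10 h00 h11]

theorem apply_eq_of_sameBorelCoset (hv : IsInduced μ μ' v) (hv' : IsInduced μ μ' v')
    {g g' : GL (Fin 2) ℚ_[p]} (h : SameBorelCoset g g') (heq : v g' = v' g') : v g = v' g := by
  obtain ⟨b, a, d, h10, h00, h11, rfl⟩ := h.exists_mul_eq
  rw [hv b g' a d h10 h00 h11, hv' b g' a d h10 h00 h11, heq]

theorem apply_eq_zero_of_sameBorelCoset (hv : IsInduced μ μ' v) {g g' : GL (Fin 2) ℚ_[p]}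
    (h : SameBorelCoset g g') (hzero : v g' = 0) : v g = 0 :=
  hv.apply_eq_of_sameBorelCoset (zero μ μ') h hzero

theorem apply_eq_of_row_eq (hv : IsInduced μ μ' v) {g g' : GL (Fin 2) ℚ_[p]} (a : ℚ_[p]ˣ)
    (hnorm : ‖(a : ℚ_[p])‖ = 1) (h : mat p g 1 = mat p g' 1)
    (ha : (mat p g).det = a * (mat p g').det) : v g = μ a * v g' := by
  obtain ⟨b, h10, h00, h11, rfl⟩ := exists_upper_mul_eq_of_row_eq (a : ℚ_[p]) h ha
  simpa [hnorm] using hv b g' a 1 h10 h00 (by simpa using h11)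

theorem ext_of_cells (hv : IsInduced μ μ' v) (hv' : IsInduced μ μ' v')
    (hlow : ∀ x : ℚ_[p], ‖x‖ < 1 → v (lowerUnipotent x) = v' (lowerUnipotent x))
    (hweyl : ∀ y : ℚ_[p], ‖y‖ ≤ 1 →
      v (wEl p * upperUnipotent y) = v' (wEl p * upperUnipotent y)) (g : GL (Fin 2) ℚ_[p]) :
    v g = v' g := by
  rcases exists_sameBorelCoset g with ⟨x, hx, hgx⟩ | ⟨y, hy, hgy⟩
  · exact hv.apply_eq_of_sameBorelCoset hv' hgx (hlow x hx)
  · exact hv.apply_eq_of_sameBorelCoset hv' hgy (hweyl y hy)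

end IsInduced

end InducedFunctions

section FirstNewVector

variable {n : ℕ} {μ μ' : ℚ_[p]ˣ →* ℂˣ} {v : GL (Fin 2) ℚ_[p] → ℂ}

theorem apply_wEl_mul_upperUnipotent_eq_zero (hn : 1 ≤ n)
    (hsupp : ∀ k : GL (Fin 2) ℚ_[p], inK p k → ¬ inI p n k → v k = 0)
    {y : ℚ_[p]} (hy : ‖y‖ ≤ 1) : v (wEl p * upperUnipotent y) = 0 :=
  hsupp _ (inK_wEl_mul_upperUnipotent hy) (not_inI_wEl_mul_upperUnipotent hn y)

namespace IsInduced

theorem apply_lowerUnipotent_eq_zero (hv : IsInduced μ μ' v) (hn : 1 ≤ n)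
    (hsupp : ∀ k : GL (Fin 2) ℚ_[p], inK p k → ¬ inI p n k → v k = 0)
    {z : ℚ_[p]} (hz : (p : ℝ) ^ (-(n : ℤ)) < ‖z‖) : v (lowerUnipotent z) = 0 := by
  rcases le_or_gt ‖z‖ 1 with hz1 | hz1
  · exact hsupp _ (inK_lowerUnipotent hz1) (not_inI_lowerUnipotent hn hz)
  · have hz0 : z ≠ 0 := norm_pos_iff.mp (one_pos.trans hz1)
    refine hv.apply_eq_zero_of_sameBorelCoset (sameBorelCoset_lowerUnipotent hz0)
      (apply_wEl_mul_upperUnipotent_eq_zero hn hsupp ?_)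
    rw [norm_inv]
    exact inv_le_one_of_one_le₀ hz1.le

theorem apply_gamma_pow_mul (hv : IsInduced μ μ' v) (m : ℕ) (g : GL (Fin 2) ℚ_[p]) :
    v (gamma p ^ m * g) = ((μ (pu p) : ℂ)⁻¹ * (Real.sqrt p : ℂ)) ^ m * v g := by
  induction m with
  | zero => simp
  | succ m ih =>
    have hstep := hv (gamma p) (gamma p ^ m * g) (pu p)⁻¹ 1 (by simp) (by simp [pu]) (by simp)
    rw [pow_succ', mul_assoc, hstep, ih]
    simp [pu, pow_succ', mul_assoc]

theorem apply_wEl_mul_upperUnipotent_mul_gamma_pow (hv : IsInduced μ μ' v) (hn : 1 ≤ n)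
    (hsupp : ∀ k : GL (Fin 2) ℚ_[p], inK p k → ¬ inI p n k → v k = 0)
    {y : ℚ_[p]} (hy : ‖y‖ ≤ 1) (m : ℕ) : v (wEl p * upperUnipotent y * gamma p ^ m) = 0 := by
  refine hv.apply_eq_zero_of_sameBorelCoset
    (sameBorelCoset_wEl_mul_upperUnipotent_mul_gamma_pow y m)
    (apply_wEl_mul_upperUnipotent_eq_zero hn hsupp ?_)
  rw [norm_mul, norm_pow]
  exact mul_le_one₀ hy (by positivity) (pow_le_one₀ (norm_nonneg _) Padic.norm_p_lt_one.le)

theorem apply_lowerUnipotent_mul_gamma_pow_eq_zero (hv : IsInduced μ μ' v) (hn : 1 ≤ n)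
    (hsupp : ∀ k : GL (Fin 2) ℚ_[p], inK p k → ¬ inI p n k → v k = 0) {m : ℕ}
    {x : ℚ_[p]} (hx : (p : ℝ) ^ (-((n + m : ℕ) : ℤ)) < ‖x‖) :
    v (lowerUnipotent x * gamma p ^ m) = 0 := by
  rw [lowerUnipotent_mul_gamma_pow, hv.apply_gamma_pow_mul, hv.apply_lowerUnipotent_eq_zero hn
    hsupp (not_le.mp ((norm_mul_inv_pow_le_iff x n m).not.mpr hx.not_ge)), mul_zero]

theorem apply_lowerUnipotent_mul_gamma_pow (hv : IsInduced μ μ' v)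
    (hlow : ∀ x : ℚ_[p], ‖x‖ ≤ (p : ℝ) ^ (-(n : ℤ)) → v (lowerUnipotent x) = 1) {m : ℕ}
    {x : ℚ_[p]} (hx : ‖x‖ ≤ (p : ℝ) ^ (-((n + m : ℕ) : ℤ))) :
    v (lowerUnipotent x * gamma p ^ m) = ((μ (pu p) : ℂ)⁻¹ * (Real.sqrt p : ℂ)) ^ m := by
  rw [lowerUnipotent_mul_gamma_pow, hv.apply_gamma_pow_mul,
    hlow _ ((norm_mul_inv_pow_le_iff x n m).mpr hx), mul_one]

end IsInduced

end FirstNewVector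

section SecondNewVector

variable {μ μ' : ℚ_[p]ˣ →* ℂˣ} {v : GL (Fin 2) ℚ_[p] → ℂ}

theorem apply_lowerUnipotent_eq_zero_of_inI_one
    (hsupp : ∀ k : GL (Fin 2) ℚ_[p], inI p 1 k → v k = 0) {x : ℚ_[p]} (hx : ‖x‖ < 1) :
    v (lowerUnipotent x) = 0 := by
  refine hsupp _ (inI_lowerUnipotent ?_)
  rw [Padic.norm_le_pow_iff_norm_lt_pow_add_one]
  simpa using hx

theorem IsInduced.apply_wEl_mul_upperUnipotent (hv : IsInduced μ μ' v)
    (hup : ∀ y : ℚ_[p], ‖y‖ ≤ 1 → v (lowerOne p * upperUnipotent y) = 1)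
    {y : ℚ_[p]} (hy : ‖y‖ ≤ 1) : v (wEl p * upperUnipotent y) = μ (-1) := by
  have hy1 : ‖y - 1‖ ≤ 1 := by
    simpa [sub_eq_add_neg, hy] using Padic.nonarchimedean y (-1)
  rw [hv.apply_eq_of_row_eq (g' := lowerOne p * upperUnipotent (y - 1)) (-1) (by simp)
    (by ext i; fin_cases i <;> simp) (by simp [Matrix.det_fin_two]), hup _ hy1, mul_one]

end SecondNewVector

section BiinducedFunctions

/-- `H` transforms on the left under `B × B` as the elements of the exterior tensor product of
`Ind_B^G (μ₁ ⊗ μ₁')` and `Ind_B^G (μ₂ ⊗ μ₂')` do. -/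
def IsBiinduced (μ₁ μ₁' μ₂ μ₂' : ℚ_[p]ˣ →* ℂˣ)
    (H : GL (Fin 2) ℚ_[p] → GL (Fin 2) ℚ_[p] → ℂ) : Prop :=
  ∀ (b₁ b₂ g₁ g₂ : GL (Fin 2) ℚ_[p]) (a₁ d₁ a₂ d₂ : ℚ_[p]ˣ),
    mat p b₁ 1 0 = 0 → mat p b₁ 0 0 = a₁ → mat p b₁ 1 1 = d₁ →
    mat p b₂ 1 0 = 0 → mat p b₂ 0 0 = a₂ → mat p b₂ 1 1 = d₂ →
    H (b₁ * g₁) (b₂ * g₂) =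
      (μ₁ a₁ : ℂ) * (μ₁' d₁ : ℂ) * (μ₂ a₂ : ℂ) * (μ₂' d₂ : ℂ) *
        (Real.sqrt ‖((a₁ : ℚ_[p]) * (a₂ : ℚ_[p])) / ((d₁ : ℚ_[p]) * (d₂ : ℚ_[p]))‖ : ℂ) *
        H g₁ g₂

namespace IsBiinduced

variable {n : ℕ} {μ₁ μ₁' μ₂ μ₂' : ℚ_[p]ˣ →* ℂˣ} {H : GL (Fin 2) ℚ_[p] → GL (Fin 2) ℚ_[p] → ℂ}

theorem left (hH : IsBiinduced μ₁ μ₁' μ₂ μ₂' H) (g₂ : GL (Fin 2) ℚ_[p]) :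
    IsInduced μ₁ μ₁' fun g₁ ↦ H g₁ g₂ := by
  intro b g₁ a d h10 h00 h11
  simpa using hH b 1 g₁ g₂ a d 1 1 h10 h00 h11 (by simp) (by simp) (by simp)

theorem right (hH : IsBiinduced μ₁ μ₁' μ₂ μ₂' H) (g₁ : GL (Fin 2) ℚ_[p]) :
    IsInduced μ₂ μ₂' (H g₁) := by
  intro b g₂ a d h10 h00 h11
  simpa using hH 1 b g₁ g₂ 1 1 a d (by simp) (by simp) (by simp) h10 h00 h11

theorem apply_eq_zero (hH : IsBiinduced μ₁ μ₁' μ₂ μ₂' H) (hdiag : ∀ g, H g g = 0)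
    (hsupp : ∀ g : GL (Fin 2) ℚ_[p],
      (¬ ∃ t j : GL (Fin 2) ℚ_[p], inT p t ∧ inJ p n j ∧ g = t * j) → H g (wEl p * g) = 0)
    {g₁ g₂ : GL (Fin 2) ℚ_[p]}
    (hrows : ¬ (‖mat p g₂ 1 1‖ ≤ ‖mat p g₂ 1 0‖ ∧
      ‖mat p g₁ 1 0‖ ≤ (p : ℝ) ^ (-(n : ℤ)) * ‖mat p g₁ 1 1‖)) : H g₁ g₂ = 0 := by
  by_cases hdet : mat p g₂ 1 0 * mat p g₁ 1 1 - mat p g₂ 1 1 * mat p g₁ 1 0 = 0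
  · have hcoset : SameBorelCoset g₁ g₂ := by
      rw [SameBorelCoset]
      linear_combination -hdet
    exact (hH.left g₂).apply_eq_zero_of_sameBorelCoset hcoset (hdiag g₂)
  · set g := ofEntries _ _ _ _ hdet with hg
    have hgw : H g (wEl p * g) = 0 :=
      hsupp g fun hTJ ↦ hrows (by simpa [hg] using norm_entries_le_of_eq_torus_mul hTJ)
    have hgg₂ : H g g₂ = 0 := (hH.right g).apply_eq_zero_of_sameBorelCoset
      (by simp [SameBorelCoset, hg, mul_comm]) hgw
    exact (hH.left g₂).apply_eq_zero_of_sameBorelCoset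
      (by simp [SameBorelCoset, hg, mul_comm]) hgg₂

theorem apply_lowerUnipotent_wEl_mul_upperUnipotent (hH : IsBiinduced μ₁ μ₁' μ₂ μ₂' H)
    (hn : 1 ≤ n) (hμ : TrivialOnOnePlusP p n (μ₁ * μ₂))
    (hJ : ∀ j : GL (Fin 2) ℚ_[p], inJ p n j → H j (wEl p * j) = 1) {x y : ℚ_[p]}
    (hx : ‖x‖ ≤ (p : ℝ) ^ (-(n : ℤ))) (hy : ‖y‖ ≤ 1) :
    H (lowerUnipotent x) (wEl p * upperUnipotent y) = 1 := by
  have hyx : ‖(1 - y * x) - 1‖ ≤ (p : ℝ) ^ (-(n : ℤ)) := by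
    simpa using (mul_le_of_le_one_left (norm_nonneg x) hy).trans hx
  have hunorm : ‖1 - y * x‖ = 1 :=
    norm_eq_one_of_norm_sub_one_lt (hyx.trans_lt (zpow_neg_natCast_lt_one hn))
  have hu0 : 1 - y * x ≠ 0 := norm_ne_zero_iff.mp (by simp [hunorm])
  set u : ℚ_[p]ˣ := .mk0 (1 - y * x) hu0 with hu
  set g : GL (Fin 2) ℚ_[p] := ofEntries 1 y x 1 (by simpa using hu0) with hg
  have hleft : H (lowerUnipotent x) (wEl p * upperUnipotent y) =
      μ₁ u⁻¹ * H g (wEl p * upperUnipotent y) :=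
    (hH.left _).apply_eq_of_row_eq u⁻¹ (by simp [hu, hunorm])
      (by ext i; fin_cases i <;> simp [hg])
      (by simp [hu, hg, Matrix.det_fin_two, hu0])
  have hdet : -1 = (1 - y * x)⁻¹ * (x * y - 1) := by
    field_simp
    ring
  have hright : H g (wEl p * upperUnipotent y) = μ₂ u⁻¹ * H g (wEl p * g) :=
    (hH.right g).apply_eq_of_row_eq u⁻¹ (by simp [hu, hunorm])
      (by ext i; fin_cases i <;> simp [hg])
      (by simpa [hu, hg, Matrix.det_fin_two] using hdet)
  have hμu : (μ₁ u⁻¹ : ℂ) * μ₂ u⁻¹ = 1 := by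
    have := hμ u hyx
    rw [← Units.val_mul, ← MonoidHom.mul_apply, map_inv, this, inv_one, Units.val_one]
  have hgJ : inJ p n g := ⟨rfl, rfl, hy, hx⟩
  rw [hleft, hright, ← mul_assoc, hμu, hJ g hgJ, mul_one]

theorem eq_mul_of_cells (hH : IsBiinduced μ₁ μ₁' μ₂ μ₂' H) (hn : 1 ≤ n)
    (hμ : TrivialOnOnePlusP p n (μ₁ * μ₂)) (hdiag : ∀ g, H g g = 0)
    (hJ : ∀ j : GL (Fin 2) ℚ_[p], inJ p n j → H j (wEl p * j) = 1)
    (hsupp : ∀ g : GL (Fin 2) ℚ_[p],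
      (¬ ∃ t j : GL (Fin 2) ℚ_[p], inT p t ∧ inJ p n j ∧ g = t * j) → H g (wEl p * g) = 0)
    {f₁ f₂ : GL (Fin 2) ℚ_[p] → ℂ} (hf₁ : IsInduced μ₁ μ₁' f₁) (hf₂ : IsInduced μ₂ μ₂' f₂)
    (hf₁low : ∀ x : ℚ_[p], (p : ℝ) ^ (-(n : ℤ)) < ‖x‖ → f₁ (lowerUnipotent x) = 0)
    (hf₁weyl : ∀ y : ℚ_[p], ‖y‖ ≤ 1 → f₁ (wEl p * upperUnipotent y) = 0)
    (hf₂low : ∀ x : ℚ_[p], ‖x‖ < 1 → f₂ (lowerUnipotent x) = 0)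
    (hone : ∀ x y : ℚ_[p], ‖x‖ ≤ (p : ℝ) ^ (-(n : ℤ)) → ‖y‖ ≤ 1 →
      f₁ (lowerUnipotent x) * f₂ (wEl p * upperUnipotent y) = 1)
    (g₁ g₂ : GL (Fin 2) ℚ_[p]) : H g₁ g₂ = f₁ g₁ * f₂ g₂ := by
  refine (hH.left g₂).ext_of_cells (hf₁.mul_const _) (fun x _ ↦ ?_) (fun y hy ↦ ?_) g₁
  · refine (hH.right _).ext_of_cells (hf₂.const_mul _) (fun z hz ↦ ?_) (fun y hy ↦ ?_) g₂
    · rw [hf₂low z hz, mul_zero]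
      exact hH.apply_eq_zero hdiag hsupp fun hrows ↦ hz.not_ge (by simpa using hrows.1)
    · rcases le_or_gt ‖x‖ ((p : ℝ) ^ (-(n : ℤ))) with hx | hx
      · rw [hH.apply_lowerUnipotent_wEl_mul_upperUnipotent hn hμ hJ hx hy, hone x y hx hy]
      · rw [hf₁low x hx, zero_mul]
        exact hH.apply_eq_zero hdiag hsupp fun hrows ↦ hx.not_ge (by simpa using hrows.2)
  · rw [hf₁weyl y hy, zero_mul]
    refine hH.apply_eq_zero (n := n) hdiag hsupp fun hrows ↦ ?_
    have hle : 1 ≤ (p : ℝ) ^ (-(n : ℤ)) * ‖y‖ := by simpa using hrows.2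
    exact hle.not_gt
      (mul_lt_one_of_nonneg_of_lt_one_left (by positivity) (zpow_neg_natCast_lt_one hn) hy)

end IsBiinduced

end BiinducedFunctions

theorem stmt13_general {n₁ n : ℕ} (hn₁ : 1 ≤ n₁) (hn : n₁ ≤ n) {μ₁ μ'₁ μ₂ μ'₂ : ℚ_[p]ˣ →* ℂˣ}
    (hμ : TrivialOnOnePlusP p n (μ₁ * μ₂))
    {α₁ : ℂ} (hα₁ : α₁ = ((μ₁ (pu p) : ℂ))⁻¹ * (Real.sqrt p : ℂ))
    {v₁ v₂ : GL (Fin 2) ℚ_[p] → ℂ} (hv₁ : IsInduced μ₁ μ'₁ v₁)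
    (hv₁low : ∀ x : ℚ_[p], ‖x‖ ≤ (p : ℝ) ^ (-(n₁ : ℤ)) → v₁ (lowerUnipotent x) = 1)
    (hv₁supp : ∀ k : GL (Fin 2) ℚ_[p], inK p k → ¬ inI p n₁ k → v₁ k = 0)
    (hv₂ : IsInduced μ₂ μ'₂ v₂)
    (hv₂up : ∀ y : ℚ_[p], ‖y‖ ≤ 1 → v₂ (lowerOne p * upperUnipotent y) = 1)
    (hv₂supp : ∀ k : GL (Fin 2) ℚ_[p], inI p 1 k → v₂ k = 0)
    {H : GL (Fin 2) ℚ_[p] → GL (Fin 2) ℚ_[p] → ℂ} (hH : IsBiinduced μ₁ μ'₁ μ₂ μ'₂ H)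
    (hHdiag : ∀ g : GL (Fin 2) ℚ_[p], H g g = 0)
    (hHJ : ∀ j : GL (Fin 2) ℚ_[p], inJ p n j → H j (wEl p * j) = 1)
    (hHsupp : ∀ g : GL (Fin 2) ℚ_[p],
      (¬ ∃ t j : GL (Fin 2) ℚ_[p], inT p t ∧ inJ p n j ∧ g = t * j) → H g (wEl p * g) = 0)
    (g₁ g₂ : GL (Fin 2) ℚ_[p]) :
    H g₁ g₂ = (μ₂ (-1) : ℂ) * α₁ ^ ((n₁ : ℤ) - (n : ℤ)) *
      v₁ (g₁ * gamma p ^ (n - n₁)) * v₂ g₂ := by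
  have hp : (0 : ℝ) < p := mod_cast (Fact.out : p.Prime).pos
  have hα₁0 : α₁ ≠ 0 := by
    rw [hα₁]
    exact mul_ne_zero (inv_ne_zero (Units.ne_zero _))
      (Complex.ofReal_ne_zero.mpr (Real.sqrt_pos.mpr hp).ne')
  obtain ⟨m, rfl⟩ := Nat.exists_eq_add_of_le hn
  rw [Nat.add_sub_cancel_left, show (n₁ : ℤ) - (n₁ + m : ℕ) = -m by push_cast; ring]
  refine hH.eq_mul_of_cells (hn₁.trans hn) hμ hHdiag hHJ hHsupp
    ((hv₁.comp_mul_right _).const_mul _) hv₂ (fun x hx ↦ ?_) (fun y hy ↦ ?_)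
    (fun x hx ↦ apply_lowerUnipotent_eq_zero_of_inI_one hv₂supp hx) (fun x y hx hy ↦ ?_) g₁ g₂
  · rw [hv₁.apply_lowerUnipotent_mul_gamma_pow_eq_zero hn₁ hv₁supp hx, mul_zero]
  · rw [hv₁.apply_wEl_mul_upperUnipotent_mul_gamma_pow hn₁ hv₁supp hy, mul_zero]
  · have hμ₂sq : (μ₂ (-1) : ℂ) * μ₂ (-1) = 1 := by
      rw [← Units.val_mul, ← map_mul, neg_one_mul, neg_neg, map_one, Units.val_one]
    rw [hv₁.apply_lowerUnipotent_mul_gamma_pow hv₁low hx, ← hα₁,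
      hv₂.apply_wEl_mul_upperUnipotent hv₂up hy, mul_assoc (μ₂ (-1) : ℂ), _root_.zpow_neg,
      zpow_natCast, inv_mul_cancel₀ (pow_ne_zero m hα₁0), mul_one, hμ₂sq]

end

/-- Lemma «calcul-H» in the ramified case: `H = ext(h)` equals
`μ₂(-1) α₁^{n₁-n} · (γ^{n-n₁} v₁) ⊗ v₂`, where `v₁` is the new vector of
`Ind_B^G (μ₁ ⊗ μ'₁)` (conductor `n₁`, `μ₁` unramified) and `v₂` is the new
vector of `Ind_B^G (μ₂ ⊗ μ'₂)` (conductor `n₂`, `μ'₂` unramified). -/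
theorem stmt13 (n₁ n₂ n : ℕ) (hn₁ : 1 ≤ n₁) (hn₂ : 1 ≤ n₂)
    (hn : max n₁ n₂ ≤ n)
    (μ₁ μ'₁ μ₂ μ'₂ : ℚ_[p]ˣ →* ℂˣ)
    (hμ₁ : Unramified p μ₁) (hμ'₂ : Unramified p μ'₂)
    (hμ₂ : TrivialOnOnePlusP p n μ₂)
    (α₁ : ℂ) (hα₁ : α₁ = ((μ₁ (pu p) : ℂ))⁻¹ * (Real.sqrt p : ℂ))
    (v₁ v₂ : GL (Fin 2) ℚ_[p] → ℂ)
    (hv₁B : ∀ (b g : GL (Fin 2) ℚ_[p]) (a d : ℚ_[p]ˣ),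
      mat p b 1 0 = 0 → mat p b 0 0 = a → mat p b 1 1 = d →
      v₁ (b * g) = (μ₁ a : ℂ) * (μ'₁ d : ℂ) *
        (Real.sqrt ‖(a : ℚ_[p]) / (d : ℚ_[p])‖ : ℂ) * v₁ g)
    (hv₁I : ∀ (g k : GL (Fin 2) ℚ_[p]) (d : ℚ_[p]ˣ),
      inI p n₁ k → mat p k 1 1 = d →
      v₁ (g * k) = (μ₁ d : ℂ) * (μ'₁ d : ℂ) * v₁ g)
    (hv₁supp : ∀ k : GL (Fin 2) ℚ_[p], inK p k → ¬ inI p n₁ k → v₁ k = 0)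
    (hv₁1 : v₁ 1 = 1)
    (hv₂B : ∀ (b g : GL (Fin 2) ℚ_[p]) (a d : ℚ_[p]ˣ),
      mat p b 1 0 = 0 → mat p b 0 0 = a → mat p b 1 1 = d →
      v₂ (b * g) = (μ₂ a : ℂ) * (μ'₂ d : ℂ) *
        (Real.sqrt ‖(a : ℚ_[p]) / (d : ℚ_[p])‖ : ℂ) * v₂ g)
    (hv₂I : ∀ (g k : GL (Fin 2) ℚ_[p]) (d : ℚ_[p]ˣ),
      inI p n₂ k → mat p k 1 1 = d →
      v₂ (g * k) = (μ₂ d : ℂ) * (μ'₂ d : ℂ) * v₂ g)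
    (hv₂supp : ∀ k : GL (Fin 2) ℚ_[p], inI p 1 k → v₂ k = 0)
    (hv₂1 : v₂ (lowerOne p) = 1)
    (h : GL (Fin 2) ℚ_[p] → ℂ)
    (hhT : ∀ (t g : GL (Fin 2) ℚ_[p]) (a d : ℚ_[p]ˣ),
      inT p t → mat p t 0 0 = a → mat p t 1 1 = d →
      h (t * g) = (μ₁ a : ℂ) * (μ'₁ d : ℂ) * (μ'₂ a : ℂ) * (μ₂ d : ℂ) * h g)
    (hhJ : ∀ j : GL (Fin 2) ℚ_[p], inJ p n j → h j = 1)
    (hhsupp : ∀ g : GL (Fin 2) ℚ_[p],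
      (¬ ∃ t j : GL (Fin 2) ℚ_[p], inT p t ∧ inJ p n j ∧ g = t * j) → h g = 0)
    (H : GL (Fin 2) ℚ_[p] → GL (Fin 2) ℚ_[p] → ℂ)
    (hHB : ∀ (b₁ b₂ g₁ g₂ : GL (Fin 2) ℚ_[p]) (a₁ d₁ a₂ d₂ : ℚ_[p]ˣ),
      mat p b₁ 1 0 = 0 → mat p b₁ 0 0 = a₁ → mat p b₁ 1 1 = d₁ →
      mat p b₂ 1 0 = 0 → mat p b₂ 0 0 = a₂ → mat p b₂ 1 1 = d₂ →
      H (b₁ * g₁) (b₂ * g₂) =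
        (μ₁ a₁ : ℂ) * (μ'₁ d₁ : ℂ) * (μ₂ a₂ : ℂ) * (μ'₂ d₂ : ℂ) *
          (Real.sqrt ‖((a₁ : ℚ_[p]) * (a₂ : ℚ_[p])) /
            ((d₁ : ℚ_[p]) * (d₂ : ℚ_[p]))‖ : ℂ) * H g₁ g₂)
    (hHdiag : ∀ g : GL (Fin 2) ℚ_[p], H g g = 0)
    (hHw : ∀ g : GL (Fin 2) ℚ_[p], H g (wEl p * g) = h g) :
    ∀ g₁ g₂ : GL (Fin 2) ℚ_[p],
      H g₁ g₂ = (μ₂ (-1) : ℂ) * α₁ ^ ((n₁ : ℤ) - (n : ℤ)) *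
        v₁ (g₁ * gamma p ^ (n - n₁)) * v₂ g₂ := by
  exact stmt13_general hn₁ (le_of_max_le_left hn)
    ((hμ₁.trivialOnOnePlusP (hn₁.trans (le_of_max_le_left hn))).mul hμ₂) hα₁ hv₁B
    (fun x hx ↦ by simpa [hv₁1] using apply_mul_of_inI hv₁I 1 (inI_lowerUnipotent hx) (by simp))
    hv₁supp hv₂B
    (fun y hy ↦ (apply_mul_of_inI hv₂I _ (inI_upperUnipotent n₂ hy) (by simp)).trans hv₂1)
    hv₂supp hHB hHdiag (fun j hj ↦ (hHw j).trans (hhJ j hj))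
    (fun g hg ↦ (hHw g).trans (hhsupp g hg))
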